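/- For every integer n ≥ 4: if 3 divides n then m(n,3) = n/3, and if 3 does not divide n then m(n,3) = ⌊n/3⌋ + 3. -/

import Mathlib

/-- The Weyl group orbit `J(n,j)` of the `j`-th fundamental weight of `SU(n)`:
vectors `(∑_{i ∈ A} e_i) - (j/n)·(e_1 + … + e_n)` for `j`-element subsets `A` of `{1,…,n}`. -/
def fundWeightOrbit (n j : ℕ) : Set (Fin n → ℝ) :=
  {v | ∃ A : Finset (Fin n), A.card = j ∧
      v = fun i => (if i ∈ A then (1 : ℝ) else 0) - (j : ℝ) / (n : ℝ)}

/-- `m(n,j)`: the minimal cardinality of a finite subset `T ⊆ J(n,j)` with `0 ∈ Conv(T)`. -/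
noncomputable def minCardZeroConv (n j : ℕ) : ℕ :=
  sInf {k | ∃ T : Finset (Fin n → ℝ), ↑T ⊆ fundWeightOrbit n j ∧ T.card = k ∧
    (0 : Fin n → ℝ) ∈ convexHull ℝ (T : Set (Fin n → ℝ))}

/-! After rescaling, a convex combination of orbit vectors equal to `0` is a fractional perfect
matching of the complete `j`-uniform hypergraph on `n` vertices: nonnegative weights on `j`-sets
such that the sets through each vertex have total weight `1`. So `m(n,j)` is the least number of
edges carrying such a matching.

For `j = 3`, an edge of weight `1` can be removed together with its three vertices. If all weights
are less than `1`, then every vertex has degree at least two, whence `2n ≤ 3k` for `k` edges; this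
suffices unless `n = 4`, where every vertex must also be omitted by some edge, each edge omitting
only one vertex. The extremal matchings combine disjoint edges of weight `1` with a matching by
four edges on four or five vertices.
-/

section Matching

open Finset

variable {V : Type*} [DecidableEq V] {r k l : ℕ} {U U' A : Finset V} {F : Finset (Finset V)}
  {w : Finset V → ℝ} {v : V}

/-- The weights `w` on the edge set `F` form a fractional perfect matching of the complete
`r`-uniform hypergraph on `U`. Edges of weight `0` are allowed in `F`, and `w` is unconstrained
outside `F`. -/
structure IsFractionalPerfectMatching (r : ℕ) (U : Finset V) (F : Finset (Finset V))
    (w : Finset V → ℝ) : Prop where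
  subset_powersetCard : F ⊆ U.powersetCard r
  nonneg : ∀ A ∈ F, 0 ≤ w A
  sum_eq_one : ∀ v ∈ U, ∑ A ∈ F with v ∈ A, w A = 1

namespace IsFractionalPerfectMatching

theorem subset (h : IsFractionalPerfectMatching r U F w) (hA : A ∈ F) : A ⊆ U :=
  (mem_powersetCard.1 (h.subset_powersetCard hA)).1

theorem card_eq (h : IsFractionalPerfectMatching r U F w) (hA : A ∈ F) : #A = r :=
  (mem_powersetCard.1 (h.subset_powersetCard hA)).2

theorem mul_sum_eq_card (h : IsFractionalPerfectMatching r U F w) :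
    r * ∑ A ∈ F, w A = #U := by
  have sum_over_vertices : ∀ A ∈ F, ∑ v ∈ U, (if v ∈ A then w A else 0) = r * w A := by
    intro A hA
    rw [← sum_filter, filter_mem_eq_inter, inter_eq_right.2 (h.subset hA), sum_const, h.card_eq hA,
      nsmul_eq_mul]
  calc r * ∑ A ∈ F, w A = ∑ A ∈ F, ∑ v ∈ U, (if v ∈ A then w A else 0) := by
        rw [mul_sum, sum_congr rfl sum_over_vertices]
    _ = ∑ v ∈ U, ∑ A ∈ F with v ∈ A, w A := by simp only [sum_comm (s := F), sum_filter]
    _ = #U := by rw [sum_congr rfl h.sum_eq_one, sum_const, nsmul_one]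

theorem filter_mem_nonempty (h : IsFractionalPerfectMatching r U F w) (hv : v ∈ U) :
    {A ∈ F | v ∈ A}.Nonempty :=
  nonempty_of_sum_ne_zero ((h.sum_eq_one v hv).trans_ne one_ne_zero)

theorem le_card (h : IsFractionalPerfectMatching r U F w) (hU : U.Nonempty) : r ≤ #U := by
  obtain ⟨v, hv⟩ := hU
  obtain ⟨A, hA⟩ := h.filter_mem_nonempty hv
  have hAF : A ∈ F := (mem_filter.1 hA).1
  exact h.card_eq hAF ▸ card_le_card (h.subset hAF)

theorem card_le_mul (h : IsFractionalPerfectMatching r U F w) : #U ≤ #F * r := by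
  have covers : U ⊆ F.biUnion id := fun v hv ↦ by
    obtain ⟨A, hA⟩ := h.filter_mem_nonempty hv
    exact mem_biUnion.2 ⟨A, mem_filter.1 hA⟩
  exact (card_le_card covers).trans (card_biUnion_le_card_mul F id r fun _ hA ↦ (h.card_eq hA).le)

theorem exists_notMem (h : IsFractionalPerfectMatching r U F w) (hr : r ≠ #U) (hv : v ∈ U) :
    ∃ A ∈ F, v ∉ A := by
  by_contra! hall
  have total_weight : ∑ A ∈ F, w A = 1 := by
    rw [← h.sum_eq_one v hv, filter_true_of_mem hall]
  have := h.mul_sum_eq_card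
  rw [total_weight, mul_one] at this
  exact hr (Nat.cast_injective this)

theorem card_le_mul_sub (h : IsFractionalPerfectMatching r U F w) (hr : r ≠ #U) :
    #U ≤ #F * (#U - r) := by
  have omitted : U ⊆ F.biUnion (U \ ·) := fun v hv ↦ by
    obtain ⟨A, hA, hvA⟩ := h.exists_notMem hr hv
    exact mem_biUnion.2 ⟨A, hA, mem_sdiff.2 ⟨hv, hvA⟩⟩
  refine (card_le_card omitted).trans (card_biUnion_le_card_mul F _ _ fun A hA ↦ ?_)
  rw [card_sdiff_of_subset (h.subset hA), h.card_eq hA]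

theorem one_lt_degree (h : IsFractionalPerfectMatching r U F w) (hlt : ∀ A ∈ F, w A < 1)
    (hv : v ∈ U) : 1 < #{A ∈ F | v ∈ A} := by
  have : (1 : ℝ) < #{A ∈ F | v ∈ A} := calc
    1 = ∑ A ∈ F with v ∈ A, w A := (h.sum_eq_one v hv).symm
    _ < ∑ A ∈ F with v ∈ A, 1 :=
      sum_lt_sum_of_nonempty (h.filter_mem_nonempty hv) fun A hA ↦ hlt A (mem_filter.1 hA).1
    _ = #{A ∈ F | v ∈ A} := by rw [sum_const, nsmul_one]
  exact_mod_cast this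

theorem card_mul_two_le (h : IsFractionalPerfectMatching r U F w) (hlt : ∀ A ∈ F, w A < 1) :
    #U * 2 ≤ #F * r := calc
  #U * 2 ≤ ∑ A ∈ F, #(U ∩ A) := le_sum_card_inter fun _ hv ↦ h.one_lt_degree hlt hv
  _ = ∑ _A ∈ F, r :=
    sum_congr rfl fun A hA ↦ by rw [inter_eq_right.2 (h.subset hA), h.card_eq hA]
  _ = #F * r := by rw [sum_const, smul_eq_mul]

theorem weight_eq_zero_of_not_disjoint (h : IsFractionalPerfectMatching r U F w) (hA : A ∈ F)
    (hwA : 1 ≤ w A) {B : Finset V} (hB : B ∈ F) (hBA : B ≠ A) (hAB : ¬ Disjoint A B) :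
    w B = 0 := by
  obtain ⟨v, hvA, hvB⟩ := not_disjoint_iff.1 hAB
  have pair_subset : {A, B} ⊆ {C ∈ F | v ∈ C} := by grind
  have pair_le : w A + w B ≤ 1 := by
    rw [← sum_pair hBA.symm, ← h.sum_eq_one v (h.subset hA hvA)]
    exact sum_le_sum_of_subset_of_nonneg pair_subset
      fun C hC _ ↦ h.nonneg C (mem_filter.1 hC).1
  linarith [h.nonneg B hB]

theorem filter_disjoint (h : IsFractionalPerfectMatching r U F w) (hA : A ∈ F) (hwA : 1 ≤ w A) :
    IsFractionalPerfectMatching r (U \ A) {B ∈ F | Disjoint A B} w where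
  subset_powersetCard B hB := by
    obtain ⟨hBF, hAB⟩ := mem_filter.1 hB
    exact mem_powersetCard.2 ⟨subset_sdiff.2 ⟨h.subset hBF, hAB.symm⟩, h.card_eq hBF⟩
  nonneg B hB := h.nonneg B (mem_filter.1 hB).1
  sum_eq_one v hv := by
    obtain ⟨hvU, hvA⟩ := mem_sdiff.1 hv
    rw [← h.sum_eq_one v hvU]
    refine sum_subset (filter_subset_filter _ (filter_subset _ _)) fun B hB hB' ↦ ?_
    obtain ⟨hBF, hvB⟩ := mem_filter.1 hB
    refine h.weight_eq_zero_of_not_disjoint hA hwA hBF (fun hBA ↦ hvA (hBA ▸ hvB)) fun hAB ↦ hB' ?_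
    exact mem_filter.2 ⟨mem_filter.2 ⟨hBF, hAB⟩, hvB⟩

theorem card_div_three_add_three_le_of_lt_one (h : IsFractionalPerfectMatching 3 U F w)
    (hlt : ∀ A ∈ F, w A < 1) (hU : ¬ 3 ∣ #U) : #U / 3 + 3 ≤ #F := by
  have three_le : 3 ≤ #U := h.le_card (card_pos.1 (by omega))
  have degree_bound : #U * 2 ≤ #F * 3 := h.card_mul_two_le hlt
  have omission_bound : #U ≤ #F * (#U - 3) := h.card_le_mul_sub (by omega)
  by_cases four : #U = 4
  · rw [four] at omission_bound ⊢
    omega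
  · omega

theorem card_div_three_add_three_le (h : IsFractionalPerfectMatching 3 U F w) (hU : ¬ 3 ∣ #U) :
    #U / 3 + 3 ≤ #F := by
  induction F using Finset.strongInduction generalizing U with
  | H F ih =>
    by_cases hlt : ∀ A ∈ F, w A < 1
    · exact h.card_div_three_add_three_le_of_lt_one hlt hU
    push Not at hlt
    obtain ⟨A, hA, hwA⟩ := hlt
    have A_nonempty : A.Nonempty := card_pos.1 (by rw [h.card_eq hA]; norm_num)
    have ssubset : {B ∈ F | Disjoint A B} ⊂ F :=
      filter_ssubset.2 ⟨A, hA, fun hAA ↦ A_nonempty.ne_empty (disjoint_self.1 hAA)⟩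
    have card_F := card_lt_card ssubset
    have card_U : #(U \ A) + 3 = #U := by
      rw [← h.card_eq hA, card_sdiff_add_card_eq_card (h.subset hA)]
    have := ih _ ssubset (h.filter_disjoint hA hwA) (by omega)
    omega

end IsFractionalPerfectMatching

/-- The complete `r`-uniform hypergraph on `U` has a fractional perfect matching carried by `k`
edges, some of which may have weight `0`. -/
def HasFractionalPerfectMatching (r : ℕ) (U : Finset V) (k : ℕ) : Prop :=
  ∃ F w, IsFractionalPerfectMatching r U F w ∧ #F = k

theorem hasFractionalPerfectMatching_empty :
    HasFractionalPerfectMatching r (∅ : Finset V) 0 :=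
  ⟨∅, 0, ⟨empty_subset _, by simp, by simp⟩, card_empty⟩

theorem hasFractionalPerfectMatching_card : HasFractionalPerfectMatching #U U 1 := by
  refine ⟨{U}, 1, ⟨by simp, by simp, fun v hv ↦ ?_⟩, card_singleton U⟩
  rw [filter_true_of_mem (by simpa), sum_singleton, Pi.one_apply]

theorem HasFractionalPerfectMatching.union (hr : 0 < r) (hU : HasFractionalPerfectMatching r U k)
    (hU' : HasFractionalPerfectMatching r U' l) (hdisj : Disjoint U U') :
    HasFractionalPerfectMatching r (U ∪ U') (k + l) := by
  obtain ⟨F, w, h, rfl⟩ := hU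
  obtain ⟨F', w', h', rfl⟩ := hU'
  have not_common : ∀ A ∈ F', A ∉ F := fun A hA' hA ↦ by
    have A_empty := disjoint_self.1 (hdisj.mono (h.subset hA) (h'.subset hA'))
    have := h.card_eq hA
    rw [A_empty, bot_eq_empty, card_empty] at this
    omega
  refine ⟨F ∪ F', fun A ↦ if A ∈ F then w A else w' A, ⟨?_, ?_, ?_⟩,
    card_union_of_disjoint (disjoint_right.2 not_common)⟩
  · exact union_subset
      (h.subset_powersetCard.trans (powersetCard_mono subset_union_left))
      (h'.subset_powersetCard.trans (powersetCard_mono subset_union_right))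
  · intro A hA
    split_ifs with hAF
    · exact h.nonneg A hAF
    · exact h'.nonneg A ((mem_union.1 hA).resolve_left hAF)
  · intro v hv
    rcases mem_union.1 hv with hv | hv
    · have no_new_edge : {A ∈ F' | v ∈ A} = ∅ := filter_eq_empty_iff.2 fun A hA hvA ↦
        disjoint_left.1 hdisj hv (h'.subset hA hvA)
      rw [filter_union, no_new_edge, union_empty, ← h.sum_eq_one v hv]
      exact sum_congr rfl fun A hA ↦ if_pos (mem_filter.1 hA).1
    · have no_old_edge : {A ∈ F | v ∈ A} = ∅ := filter_eq_empty_iff.2 fun A hA hvA ↦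
        disjoint_left.1 hdisj (h.subset hA hvA) hv
      rw [filter_union, no_old_edge, empty_union, ← h'.sum_eq_one v hv]
      exact sum_congr rfl fun A hA ↦ if_neg (not_common A (mem_filter.1 hA).1)

theorem hasFractionalPerfectMatching_of_card_eq_add_mul {u : ℕ} (hr : 0 < r)
    (base : ∀ U : Finset V, #U = u → HasFractionalPerfectMatching r U k) (m : ℕ)
    (hU : #U = u + r * m) : HasFractionalPerfectMatching r U (k + m) := by
  induction m generalizing U with
  | zero => exact base U hU
  | succ m ih =>
    rw [mul_add_one] at hU
    obtain ⟨B, hBU, hB⟩ := exists_subset_card_eq (show r ≤ #U by omega)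
    have rest : HasFractionalPerfectMatching r (U \ B) (k + m) :=
      ih (by rw [card_sdiff_of_subset hBU]; omega)
    have edge : HasFractionalPerfectMatching r B 1 := hB ▸ hasFractionalPerfectMatching_card
    simpa only [sdiff_union_of_subset hBU, add_assoc] using rest.union hr edge sdiff_disjoint

theorem hasFractionalPerfectMatching_of_card_eq_add_one (hr : 0 < r) (hU : #U = r + 1) :
    HasFractionalPerfectMatching r U (r + 1) := by
  have erase_injOn : Set.InjOn U.erase U := U.erase_injOn
  refine ⟨U.image U.erase, fun _ ↦ 1 / r, ⟨?_, fun _ _ ↦ by positivity, fun v hv ↦ ?_⟩,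
    (card_image_of_injOn erase_injOn).trans hU⟩
  · refine image_subset_iff.2 fun u hu ↦ mem_powersetCard.2 ⟨erase_subset u U, ?_⟩
    rw [card_erase_of_mem hu, hU, Nat.add_sub_cancel]
  · have degree : #{A ∈ U.image U.erase | v ∈ A} = r := by
      have : {u ∈ U | v ∈ U.erase u} = U.erase v := by grind
      rw [filter_image, this, card_image_of_injOn (erase_injOn.mono (erase_subset v U)),
        card_erase_of_mem hv, hU, Nat.add_sub_cancel]
    rw [sum_const, degree, nsmul_eq_mul]
    field_simp

theorem hasFractionalPerfectMatching_union_of_card_add_one_eq {B C : Finset V} (hr : 1 < r)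
    (hB : #B = r) (hC : #C + 1 = r) (disj : Disjoint B C) :
    HasFractionalPerfectMatching r (B ∪ C) (r + 1) := by
  obtain ⟨c, hc⟩ : C.Nonempty := card_pos.1 (by omega)
  have notMem_C : ∀ b ∈ B, b ∉ C := fun _ hb ↦ disjoint_left.1 disj hb
  have insert_injOn : Set.InjOn (insert · C) B := (insert_inj_on C).mono notMem_C
  have not_C_subset : ¬ C ⊆ B := fun hCB ↦ notMem_C c (hCB hc) hc
  have B_notMem : B ∉ B.image (insert · C) := fun hBmem ↦ by
    obtain ⟨b, -, hb⟩ := mem_image.1 hBmem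
    exact not_C_subset (hb ▸ subset_insert b C)
  refine ⟨insert B (B.image (insert · C)), fun A ↦ if C ⊆ A then 1 / r else (r - 1) / r,
    ⟨?_, fun A _ ↦ ?_, fun v hv ↦ ?_⟩, ?_⟩
  · refine insert_subset (mem_powersetCard.2 ⟨subset_union_left, hB⟩)
      (image_subset_iff.2 fun b hb ↦ mem_powersetCard.2 ⟨?_, ?_⟩)
    · exact insert_subset (mem_union_left C hb) subset_union_right
    · rw [card_insert_of_notMem (notMem_C b hb), hC]
  · have : (0 : ℝ) ≤ r - 1 := sub_nonneg.2 (by exact_mod_cast hr.le)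
    split_ifs <;> positivity
  · rw [sum_filter, sum_insert B_notMem, sum_image insert_injOn]
    simp only [subset_insert, if_true, not_C_subset, if_false]
    by_cases hvB : v ∈ B
    · simp only [mem_insert, notMem_C v hvB, or_false, sum_ite_eq, hvB, if_true]
      field_simp
      ring
    · have hvC : v ∈ C := (mem_union.1 hv).resolve_left hvB
      simp only [hvB, if_false, mem_insert, hvC, or_true, if_true, sum_const, hB, nsmul_eq_mul]
      field_simp
      ring
  · rw [card_insert_of_notMem B_notMem, card_image_of_injOn insert_injOn, hB]

theorem hasFractionalPerfectMatching_of_card_add_one_eq_two_mul (hr : 1 < r)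
    (hU : #U + 1 = 2 * r) : HasFractionalPerfectMatching r U (r + 1) := by
  obtain ⟨B, hBU, hB⟩ := exists_subset_card_eq (show r ≤ #U by omega)
  have card_sdiff : #(U \ B) + 1 = r := by rw [card_sdiff_of_subset hBU]; omega
  simpa only [union_sdiff_of_subset hBU] using
    hasFractionalPerfectMatching_union_of_card_add_one_eq hr hB card_sdiff disjoint_sdiff

theorem hasFractionalPerfectMatching_three (hU : 3 < #U) (hdvd : ¬ 3 ∣ #U) :
    HasFractionalPerfectMatching 3 U (#U / 3 + 3) := by
  rw [show #U / 3 + 3 = 4 + (#U / 3 - 1) by omega]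
  obtain hmod | hmod : #U % 3 = 1 ∨ #U % 3 = 2 := by omega
  · exact hasFractionalPerfectMatching_of_card_eq_add_mul three_pos (u := 4)
      (fun U hU ↦ hasFractionalPerfectMatching_of_card_eq_add_one three_pos hU) _ (by omega)
  · exact hasFractionalPerfectMatching_of_card_eq_add_mul three_pos (u := 5)
      (fun U hU ↦ hasFractionalPerfectMatching_of_card_add_one_eq_two_mul (by norm_num)
        (by omega)) _ (by omega)

end Matching

section Orbit

open Finset

theorem mem_convexHull_finset_image_iff {R ι E : Type*} [Field R] [LinearOrder R]
    [IsStrictOrderedRing R] [AddCommGroup E] [Module R E] [DecidableEq E]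
    {s : Finset ι} {f : ι → E} (hf : Set.InjOn f s) {x : E} :
    x ∈ convexHull R (s.image f : Set E) ↔
      ∃ c : ι → R, (∀ a ∈ s, 0 ≤ c a) ∧ ∑ a ∈ s, c a = 1 ∧ ∑ a ∈ s, c a • f a = x := by
  constructor
  · intro hx
    obtain ⟨c, c_nonneg, c_sum, rfl⟩ := Finset.mem_convexHull'.1 hx
    rw [sum_image hf] at c_sum
    exact ⟨c ∘ f, fun a ha ↦ c_nonneg _ (mem_image_of_mem f ha), c_sum,
      (sum_image (f := fun y ↦ c y • y) hf).symm⟩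
  · rintro ⟨c, c_nonneg, c_sum, rfl⟩
    exact (convex_convexHull R _).sum_mem c_nonneg c_sum fun a ha ↦
      subset_convexHull R _ (mem_image_of_mem f ha)

variable {n j k : ℕ} {F : Finset (Finset (Fin n))}

/-- The vector of `J(n,j)` attached to the set `A`; it lies in `J(n,j)` when `A` has `j`
elements. -/
noncomputable def fundWeight (n j : ℕ) (A : Finset (Fin n)) : Fin n → ℝ :=
  fun i ↦ (if i ∈ A then 1 else 0) - j / n

theorem fundWeight_injective : Function.Injective (fundWeight n j) := by
  intro A B h
  ext i
  have := congrFun h i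
  simp only [fundWeight, sub_left_inj] at this
  grind

theorem fundWeightOrbit_eq_image :
    fundWeightOrbit n j = fundWeight n j '' (univ.powersetCard j : Finset (Finset (Fin n))) := by
  ext x
  simp only [fundWeightOrbit, Set.mem_ofPred_eq, Set.mem_image, mem_coe, mem_powersetCard_univ,
    eq_comm (b := x)]
  rfl

theorem sum_smul_fundWeight_apply (c : Finset (Fin n) → ℝ) (i : Fin n) :
    (∑ A ∈ F, c A • fundWeight n j A) i =
      ∑ A ∈ F with i ∈ A, c A - (∑ A ∈ F, c A) * (j / n) := by
  simp only [Finset.sum_apply, Pi.smul_apply, fundWeight, smul_eq_mul, mul_sub, mul_ite, mul_one,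
    mul_zero, sum_sub_distrib, sum_filter, sum_mul]

theorem zero_mem_convexHull_image_fundWeight_iff (hj : 0 < j) (hn : 0 < n)
    (hF : F ⊆ univ.powersetCard j) :
    0 ∈ convexHull ℝ (F.image (fundWeight n j) : Set (Fin n → ℝ)) ↔
      ∃ w, IsFractionalPerfectMatching j univ F w := by
  rw [mem_convexHull_finset_image_iff fundWeight_injective.injOn]
  constructor
  · rintro ⟨c, c_nonneg, c_sum, c_zero⟩
    refine ⟨fun A ↦ n / j * c A, hF, fun A hA ↦ mul_nonneg (by positivity) (c_nonneg A hA),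
      fun i _ ↦ ?_⟩
    have degree : ∑ A ∈ F with i ∈ A, c A = j / n := by
      have := sum_smul_fundWeight_apply (j := j) (F := F) c i
      rw [c_zero, c_sum, Pi.zero_apply, one_mul] at this
      linarith
    rw [← mul_sum, degree]
    field_simp
  · rintro ⟨w, h⟩
    have total_weight : ∑ A ∈ F, j / n * w A = 1 := by
      rw [← mul_sum, div_mul_eq_mul_div, h.mul_sum_eq_card, card_univ, Fintype.card_fin]
      field_simp
    refine ⟨fun A ↦ j / n * w A, fun A hA ↦ mul_nonneg (by positivity) (h.nonneg A hA),
      total_weight, funext fun i ↦ ?_⟩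
    rw [sum_smul_fundWeight_apply, total_weight, ← mul_sum, h.sum_eq_one i (mem_univ i),
      Pi.zero_apply]
    ring

theorem minCardZeroConv_eq_sInf (hj : 0 < j) (hn : 0 < n) :
    minCardZeroConv n j =
      sInf {k | HasFractionalPerfectMatching j (univ : Finset (Fin n)) k} := by
  unfold minCardZeroConv HasFractionalPerfectMatching
  congr! 3 with k
  constructor
  · rintro ⟨T, hT, rfl, h0⟩
    rw [fundWeightOrbit_eq_image, subset_set_image_iff] at hT
    obtain ⟨F, hF, rfl⟩ := hT
    obtain ⟨w, h⟩ := (zero_mem_convexHull_image_fundWeight_iff hj hn (coe_subset.1 hF)).1 h0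
    exact ⟨F, w, h, (card_image_of_injective F fundWeight_injective).symm⟩
  · rintro ⟨F, w, h, rfl⟩
    refine ⟨F.image (fundWeight n j), ?_, card_image_of_injective F fundWeight_injective,
      (zero_mem_convexHull_image_fundWeight_iff hj hn h.subset_powersetCard).2 ⟨w, h⟩⟩
    rw [fundWeightOrbit_eq_image, coe_image]
    exact Set.image_mono (coe_subset.2 h.subset_powersetCard)

theorem minCardZeroConv_eq (hj : 0 < j) (hn : 0 < n)
    (hk : HasFractionalPerfectMatching j (univ : Finset (Fin n)) k)
    (hmin : ∀ F w, IsFractionalPerfectMatching j (univ : Finset (Fin n)) F w → k ≤ #F) :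
    minCardZeroConv n j = k := by
  rw [minCardZeroConv_eq_sInf hj hn]
  refine IsLeast.csInf_eq ⟨hk, ?_⟩
  rintro _ ⟨F, w, h, rfl⟩
  exact hmin F w h

theorem minCardZeroConv_of_dvd (hj : 0 < j) (hn : 0 < n) (hdvd : j ∣ n) :
    minCardZeroConv n j = n / j := by
  refine minCardZeroConv_eq hj hn ?_ fun F w h ↦ Nat.div_le_of_le_mul ?_
  · rw [← zero_add (n / j)]
    refine hasFractionalPerfectMatching_of_card_eq_add_mul hj (u := 0) (fun U hU ↦ ?_) (n / j) ?_
    · rw [card_eq_zero.1 hU]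
      exact hasFractionalPerfectMatching_empty
    · rw [zero_add, Nat.mul_div_cancel' hdvd, card_fin]
  · simpa only [card_fin, mul_comm] using h.card_le_mul

end Orbit

/-- For every `n ≥ 4`: if `3 ∣ n` then `m(n,3) = n/3`, and otherwise `m(n,3) = ⌊n/3⌋ + 3`. -/
theorem minCardZeroConv_three (n : ℕ) (hn : 4 ≤ n) :
    (3 ∣ n → minCardZeroConv n 3 = n / 3) ∧
    (¬ 3 ∣ n → minCardZeroConv n 3 = n / 3 + 3) := by
  refine ⟨minCardZeroConv_of_dvd three_pos (by omega), fun hdvd ↦ ?_⟩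
  refine minCardZeroConv_eq three_pos (by omega) ?_ fun F w h ↦ ?_
  · have three_lt : 3 < (Finset.univ : Finset (Fin n)).card := by simpa
    simpa using hasFractionalPerfectMatching_three three_lt (by simpa)
  · simpa using h.card_div_three_add_three_le (by simpa)
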